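/- Under the stated setup for the map T, the total derivative DT(x,t) exists for almost every (x,t) ∈ U, the function (x,t) ↦ |det DT(x,t)| is integrable on U, and ∫_U |det DT(x,t)| d(x,t) = ∫_{ℝ^d} #(T⁻¹({y})) dy, where #(T⁻¹({y})) ∈ ℕ ∪ {∞} is the cardinality of the fibre of T over y and the right-hand side is the Lebesgue integral of this extended-real-valued function. In particular, T⁻¹({y}) is a finite set for almost every y ∈ ℝ^d. -/

import Mathlib

open MeasureTheory ENNReal

noncomputable section

/-- The first `n` coordinates of `z ∈ ℝ^{n+1}`. -/
def xpart {n : ℕ} (z : EuclideanSpace ℝ (Fin (n + 1))) : EuclideanSpace ℝ (Fin n) :=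
  (EuclideanSpace.equiv (Fin n) ℝ).symm fun i => z i.castSucc

/-- The last coordinate of `z ∈ ℝ^{n+1}`. -/
def tlast {n : ℕ} (z : EuclideanSpace ℝ (Fin (n + 1))) : ℝ := z (Fin.last n)

/-- The vector `(x, c) ∈ ℝ^{n+1}` obtained by appending `c ∈ ℝ` to `x ∈ ℝ^n`. -/
def hvec {n : ℕ} (x : EuclideanSpace ℝ (Fin n)) (c : ℝ) : EuclideanSpace ℝ (Fin (n + 1)) :=
  (EuclideanSpace.equiv (Fin (n + 1)) ℝ).symm (Fin.snoc ((EuclideanSpace.equiv (Fin n) ℝ) x) c)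

/-- The coordinate transformation `T(x,t) = R(t)·(h(x,t) - k0(t)·s(t))`,
with `h(x,t) = (x, √(k0(t)² - |x|²))`, viewed as a map `ℝ^{n+1} → ℝ^{n+1}` via the
identification `ℝ^n × ℝ ≅ ℝ^{n+1}`. -/
def Tmap {n : ℕ} (k0 : ℝ → ℝ) (s : ℝ → EuclideanSpace ℝ (Fin (n + 1)))
    (R : ℝ → EuclideanSpace ℝ (Fin (n + 1)) →L[ℝ] EuclideanSpace ℝ (Fin (n + 1)))
    (z : EuclideanSpace ℝ (Fin (n + 1))) : EuclideanSpace ℝ (Fin (n + 1)) :=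
  R (tlast z)
    (hvec (xpart z) (Real.sqrt ((k0 (tlast z)) ^ 2 - ‖xpart z‖ ^ 2)) -
      k0 (tlast z) • s (tlast z))

/-- The parameter domain `U = {(x,t) : t ∈ [0,L], |x| < k0(t)}` viewed inside `ℝ^{n+1}`. -/
def Uset {n : ℕ} (L : ℝ) (k0 : ℝ → ℝ) : Set (EuclideanSpace ℝ (Fin (n + 1))) :=
  {z | tlast z ∈ Set.Icc 0 L ∧ ‖xpart z‖ < k0 (tlast z)}


lemma encard_partition {E F : Type*} [MeasurableSpace E] [MeasurableSingletonClass E]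
    (f : E → F) (s : Set E) (t : ℕ → Set E) (ht : Pairwise (Function.onFun Disjoint t))
    (hst : s ⊆ ⋃ n, t n) (hinj : ∀ n, Set.InjOn f (s ∩ t n)) (y : F) :
    ENat.toENNReal ((f ⁻¹' {y} ∩ s).encard) =
      ∑' n, (f '' (s ∩ t n)).indicator (fun _ => (1 : ℝ≥0∞)) y := by
  have hsub : ∀ n, (f ⁻¹' {y} ∩ (s ∩ t n)).Subsingleton := by
    intro n a ha b hb
    exact hinj n ha.2 hb.2 (ha.1.trans hb.1.symm)
  have hm : ∀ n, MeasurableSet (f ⁻¹' {y} ∩ (s ∩ t n)) := fun n => (hsub n).measurableSet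
  have hU : f ⁻¹' {y} ∩ s = ⋃ n, f ⁻¹' {y} ∩ (s ∩ t n) := by
    rw [← Set.inter_iUnion, ← Set.inter_iUnion, Set.inter_eq_left.2 hst]
  rw [← Measure.count_apply (by rw [hU]; exact MeasurableSet.iUnion hm), hU,
    measure_iUnion _ hm]
  · congr 1
    ext n
    rw [Measure.count_apply (hm n)]
    by_cases h : y ∈ f '' (s ∩ t n)
    · rw [Set.indicator_of_mem h]
      obtain ⟨a, ha, hay⟩ := h
      have : f ⁻¹' {y} ∩ (s ∩ t n) = {a} := (hsub n).eq_singleton_of_mem ⟨hay, ha⟩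
      simp [this]
    · rw [Set.indicator_of_notMem h]
      have : f ⁻¹' {y} ∩ (s ∩ t n) = ∅ := by
        ext a
        constructor
        · rintro ⟨h1, h2⟩
          exact h ⟨a, h2, h1⟩
        · simp
      simp [this]
  · intro i j hij
    exact (ht hij).mono (fun a ha => ha.2.2) (fun a ha => ha.2.2)

lemma area_general {E : Type*} [NormedAddCommGroup E] [NormedSpace ℝ E] [FiniteDimensional ℝ E]
    [MeasurableSpace E] [BorelSpace E] (μ : Measure E) [μ.IsAddHaarMeasure]
    (f : E → E) (f' : E → E →L[ℝ] E) (s : Set E) (hs : MeasurableSet s)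
    (hf' : ∀ x ∈ s, HasFDerivWithinAt f (f' x) s x) (hd : ∀ x ∈ s, (f' x).det ≠ 0) :
    Measurable (fun y => ENat.toENNReal ((f ⁻¹' {y} ∩ s).encard)) ∧
    ∫⁻ x in s, ENNReal.ofReal |(f' x).det| ∂μ =
      ∫⁻ y, ENat.toENNReal ((f ⁻¹' {y} ∩ s).encard) ∂μ := by
  rcases s.eq_empty_or_nonempty with rfl | hne
  · simp
  have key : ∀ A : E →L[ℝ] E, ∃ r : NNReal, r ≠ 0 ∧ (A.det ≠ 0 → ∀ u : Set E,
      ApproximatesLinearOn f A u r → Set.InjOn f u) := by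
    intro A
    by_cases hA : A.det = 0
    · exact ⟨1, one_ne_zero, fun h => absurd hA h⟩
    · let B : E ≃L[ℝ] E := A.toContinuousLinearEquivOfDetNeZero hA
      have hBA : (B : E →L[ℝ] E) = A := by ext; simp [B]
      rcases subsingleton_or_nontrivial E with hE | hE
      · exact ⟨1, one_ne_zero, fun _ u _ => Set.injOn_of_injective (Function.injective_of_subsingleton f)⟩
      · have hpos : 0 < ‖(B.symm : E →L[ℝ] E)‖₊ := B.nnnorm_symm_pos
        refine ⟨‖(B.symm : E →L[ℝ] E)‖₊⁻¹ / 2, by positivity, fun _ u hu => ?_⟩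
        rw [← hBA] at hu
        exact hu.injOn (Or.inr (NNReal.half_lt_self (by positivity)))
  choose r hr0 hr using key
  obtain ⟨t, A, htd, htm, hst, hap, hA⟩ :=
    exists_partition_approximatesLinearOn_of_hasFDerivWithinAt f s f' hf' r hr0
  have hinj : ∀ n, Set.InjOn f (s ∩ t n) := by
    intro n
    obtain ⟨y, hy, e⟩ := hA hne n
    exact hr (A n) (e ▸ hd y hy) _ (hap n)
  have hder : ∀ n, ∀ x ∈ s ∩ t n, HasFDerivWithinAt f (f' x) (s ∩ t n) x :=
    fun n x hx => (hf' x hx.1).mono Set.inter_subset_left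
  have himg : ∀ n, MeasurableSet (f '' (s ∩ t n)) := fun n =>
    measurable_image_of_fderivWithin (hs.inter (htm n)) (hder n) (hinj n)
  simp_rw [encard_partition f s t htd hst hinj]
  have hmi : ∀ n, Measurable ((f '' (s ∩ t n)).indicator (fun _ => (1 : ℝ≥0∞))) :=
    fun n => measurable_const.indicator (himg n)
  refine ⟨Measurable.tsum hmi, ?_⟩
  rw [lintegral_tsum (fun n => (hmi n).aemeasurable)]
  have hU : s = ⋃ n, s ∩ t n := by rw [← Set.inter_iUnion, Set.inter_eq_left.2 hst]
  conv_lhs => rw [hU]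
  rw [lintegral_iUnion (fun n => hs.inter (htm n))
    (fun i j hij => (htd hij).mono Set.inter_subset_right Set.inter_subset_right)]
  congr 1
  ext n
  rw [lintegral_abs_det_fderiv_eq_addHaar_image μ (hs.inter (htm n)) (hder n) (hinj n),
    lintegral_indicator (himg n)]
  simp

lemma ker_one (n : ℕ) (hn : 1 ≤ n) :
    Integrable (fun x : EuclideanSpace ℝ (Fin n) => 1 / √(1 - ‖x‖ ^ 2)) := by
  have : Nonempty (Fin n) := ⟨⟨0, hn⟩⟩
  have h1 : IntegrableOn (fun x : EuclideanSpace ℝ (Fin n) => (fun r : ℝ => 1 / √(1 - r ^ 2)) ‖x‖)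
      (Metric.ball 0 1) volume := by
    rw [integrableOn_fun_norm_addHaar (volume : Measure (EuclideanSpace ℝ (Fin n)))
      (f := fun r : ℝ => 1 / √(1 - r ^ 2))]
    have h2 : IntegrableOn (fun r : ℝ => (1 - r) ^ (-(1/2) : ℝ)) (Set.Ioo 0 1) volume := by
      have h3 := intervalIntegral.intervalIntegrable_rpow' (a := 0) (b := 1)
        (r := (-(1/2) : ℝ)) (by norm_num)
      have h4 := h3.comp_sub_left 1
      simp only [sub_zero, sub_self] at h4
      have h5 := h4.symm
      rw [intervalIntegrable_iff_integrableOn_Ioo_of_le (by norm_num)] at h5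
      exact h5
    refine Integrable.mono' h2 ?_ ?_
    · exact Measurable.aestronglyMeasurable (by fun_prop)
    · filter_upwards [ae_restrict_mem measurableSet_Ioo] with r hr
      have h0 : 0 < 1 - r := by linarith [hr.2]
      rw [Real.rpow_neg h0.le, ← Real.sqrt_eq_rpow, smul_eq_mul, norm_mul, norm_pow,
        Real.norm_of_nonneg hr.1.le, Real.norm_of_nonneg (by positivity), ← one_div]
      have : 1 / √(1 - r ^ 2) ≤ 1 / √(1 - r) := by
        apply one_div_le_one_div_of_le (Real.sqrt_pos.2 h0)
        apply Real.sqrt_le_sqrt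
        nlinarith [hr.1, hr.2]
      calc _ ≤ 1 * (1 / √(1 - r ^ 2)) := by
            apply mul_le_mul_of_nonneg_right (pow_le_one₀ hr.1.le hr.2.le) (by positivity)
        _ ≤ _ := by rw [one_mul]; exact this
  rw [integrableOn_iff_integrable_of_support_subset] at h1
  · exact h1
  · intro x hx
    rw [mem_ball_zero_iff]
    by_contra h
    apply hx
    have : √(1 - ‖x‖ ^ 2) = 0 := Real.sqrt_eq_zero_of_nonpos (by nlinarith)
    simp [this]

lemma ker_bound (n : ℕ) (hn : 1 ≤ n) (M : ℝ) : ∃ C : ℝ≥0∞, C ≠ ⊤ ∧ ∀ k : ℝ, 0 ≤ k → k ≤ M →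
    ∫⁻ x : EuclideanSpace ℝ (Fin n), ENNReal.ofReal (1 / √(k ^ 2 - ‖x‖ ^ 2)) ≤ C := by
  set I := ∫ x : EuclideanSpace ℝ (Fin n), 1 / √(1 - ‖x‖ ^ 2) with hI
  have hI0 : 0 ≤ I := integral_nonneg (fun x => by positivity)
  refine ⟨ENNReal.ofReal (M ^ (n - 1) * I), ENNReal.ofReal_ne_top, fun k hk hkM => ?_⟩
  rcases hk.eq_or_lt with rfl | hk
  · have : ∀ x : EuclideanSpace ℝ (Fin n), √((0:ℝ) ^ 2 - ‖x‖ ^ 2) = 0 := fun x =>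
      Real.sqrt_eq_zero_of_nonpos (by nlinarith [sq_nonneg ‖x‖])
    simp_rw [this]
    simp
  have e : ∀ x : EuclideanSpace ℝ (Fin n), 1 / √(k ^ 2 - ‖x‖ ^ 2) =
      k⁻¹ * (1 / √(1 - ‖k⁻¹ • x‖ ^ 2)) := by
    intro x
    have : k ^ 2 - ‖x‖ ^ 2 = k ^ 2 * (1 - ‖k⁻¹ • x‖ ^ 2) := by
      rw [norm_smul, norm_inv, Real.norm_of_nonneg hk.le]; field_simp
    rw [this, Real.sqrt_mul (by positivity), Real.sqrt_sq hk.le]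
    rw [one_div, mul_inv, one_div]
  have hint : Integrable (fun x : EuclideanSpace ℝ (Fin n) => 1 / √(k ^ 2 - ‖x‖ ^ 2)) := by
    simp_rw [e]
    exact ((ker_one n hn).comp_smul (inv_ne_zero hk.ne')).const_mul _
  rw [← ofReal_integral_eq_lintegral_ofReal hint (Filter.Eventually.of_forall fun x => by positivity)]
  apply ENNReal.ofReal_le_ofReal
  simp_rw [e]
  rw [integral_const_mul, Measure.integral_comp_inv_smul volume
    (fun x : EuclideanSpace ℝ (Fin n) => 1 / √(1 - ‖x‖ ^ 2)), ← hI, finrank_euclideanSpace_fin,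
    smul_eq_mul, abs_of_nonneg (by positivity), ← mul_assoc]
  apply mul_le_mul_of_nonneg_right _ hI0
  obtain ⟨m, rfl⟩ : ∃ m, n = m + 1 := ⟨n - 1, by omega⟩
  rw [Nat.add_sub_cancel, pow_succ, mul_comm (k ^ m), ← mul_assoc, inv_mul_cancel₀ hk.ne', one_mul]
  exact pow_le_pow_left₀ hk.le hkM m

lemma lintegral_split (n : ℕ) (g : EuclideanSpace ℝ (Fin n) × ℝ → ℝ≥0∞) (hg : Measurable g) :
    ∫⁻ z : EuclideanSpace ℝ (Fin (n + 1)), g (xpart z, tlast z) =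
      ∫⁻ t : ℝ, ∫⁻ x : EuclideanSpace ℝ (Fin n), g (x, t) := by
  have h1 := PiLp.volume_preserving_ofLp (Fin (n + 1))
  have h2 := volume_preserving_piFinSuccAbove (fun _ : Fin (n + 1) => ℝ) (Fin.last n)
  have h3 : MeasurePreserving (Prod.map (id : ℝ → ℝ)
      (WithLp.toLp 2 : (Fin n → ℝ) → EuclideanSpace ℝ (Fin n))) (volume.prod volume)
        (volume.prod volume) :=
    (MeasurePreserving.id volume).prod (PiLp.volume_preserving_toLp (Fin n))
  have h4 := (h3.comp h2).comp h1
  have h5 := h4.lintegral_comp (f := fun p : ℝ × EuclideanSpace ℝ (Fin n) => g (p.2, p.1))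
    (by fun_prop)
  rw [lintegral_prod _ (by fun_prop)] at h5
  rw [← h5]
  congr 1
  ext z
  simp [xpart, tlast, Fin.insertNthEquiv, EuclideanSpace.equiv]
  rfl

lemma slice_null (n : ℕ) (t : ℝ) :
    volume {z : EuclideanSpace ℝ (Fin (n + 1)) | tlast z = t} = 0 := by
  have h1 := PiLp.volume_preserving_ofLp (Fin (n + 1))
  have h2 := Measure.pi_hyperplane (fun _ : Fin (n + 1) => (volume : Measure ℝ)) (Fin.last n) t
  have hm : MeasurableSet {f : Fin (n + 1) → ℝ | f (Fin.last n) = t} :=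
    measurableSet_eq_fun (by fun_prop) (by fun_prop)
  have := h1.measure_preimage hm.nullMeasurableSet
  rw [volume_pi, h2] at this
  exact this

lemma det_bdd {E : Type*} [NormedAddCommGroup E] [NormedSpace ℝ E] [FiniteDimensional ℝ E]
    (K : ℝ) : ∃ C : ℝ, ∀ A : E →L[ℝ] E, ‖A‖ ≤ K → |A.det| ≤ C := by
  have : ProperSpace (E →L[ℝ] E) := FiniteDimensional.proper ℝ _
  obtain ⟨C, hC⟩ := (isCompact_closedBall (0 : E →L[ℝ] E) K).exists_bound_of_continuousOn
    (f := fun A => A.det) ContinuousLinearMap.continuous_det.continuousOn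
  exact ⟨C, fun A hA => hC A (by simpa using hA)⟩

lemma norm_sq_split {n : ℕ} (z : EuclideanSpace ℝ (Fin (n + 1))) :
    ‖z‖ ^ 2 = ‖xpart z‖ ^ 2 + tlast z ^ 2 := by
  rw [EuclideanSpace.norm_sq_eq, EuclideanSpace.norm_sq_eq, Fin.sum_univ_castSucc]
  simp [xpart, tlast, EuclideanSpace.equiv]

lemma xpart_hvec {n : ℕ} (x : EuclideanSpace ℝ (Fin n)) (c : ℝ) : xpart (hvec x c) = x := by
  ext i
  simp [xpart, hvec, EuclideanSpace.equiv]

lemma tlast_hvec {n : ℕ} (x : EuclideanSpace ℝ (Fin n)) (c : ℝ) : tlast (hvec x c) = c := by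
  simp [tlast, hvec, EuclideanSpace.equiv]

lemma hvec_eta {n : ℕ} (z : EuclideanSpace ℝ (Fin (n + 1))) : hvec (xpart z) (tlast z) = z := by
  ext i
  refine Fin.lastCases ?_ (fun i => ?_) i <;> simp [xpart, tlast, hvec, EuclideanSpace.equiv]

lemma norm_sq_hvec {n : ℕ} (x : EuclideanSpace ℝ (Fin n)) (c : ℝ) :
    ‖hvec x c‖ ^ 2 = ‖x‖ ^ 2 + c ^ 2 := by
  rw [norm_sq_split, xpart_hvec, tlast_hvec]

lemma norm_xpart_le {n : ℕ} (z : EuclideanSpace ℝ (Fin (n + 1))) : ‖xpart z‖ ≤ ‖z‖ := by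
  refine le_of_pow_le_pow_left₀ two_ne_zero (norm_nonneg _) ?_
  rw [norm_sq_split z]; nlinarith [sq_nonneg (tlast z)]

lemma abs_tlast_le {n : ℕ} (z : EuclideanSpace ℝ (Fin (n + 1))) : |tlast z| ≤ ‖z‖ := by
  refine le_of_pow_le_pow_left₀ two_ne_zero (norm_nonneg _) ?_
  rw [norm_sq_split z, sq_abs]; nlinarith [sq_nonneg ‖xpart z‖]

/-- `tlast` as a continuous linear map. -/
def rhoL (n : ℕ) : EuclideanSpace ℝ (Fin (n + 1)) →L[ℝ] ℝ :=
  LinearMap.toContinuousLinearMap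
    { toFun := tlast, map_add' := fun a b => by simp [tlast],
      map_smul' := fun a b => by simp [tlast] }

/-- `xpart` as a continuous linear map. -/
def XL (n : ℕ) : EuclideanSpace ℝ (Fin (n + 1)) →L[ℝ] EuclideanSpace ℝ (Fin n) :=
  LinearMap.toContinuousLinearMap
    { toFun := xpart, map_add' := fun a b => by ext i; simp [xpart, EuclideanSpace.equiv],
      map_smul' := fun a b => by ext i; simp [xpart, EuclideanSpace.equiv] }

/-- `hvec · 0` as a continuous linear map. -/
def JL (n : ℕ) : EuclideanSpace ℝ (Fin n) →L[ℝ] EuclideanSpace ℝ (Fin (n + 1)) :=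
  LinearMap.toContinuousLinearMap
    { toFun := fun x => hvec x 0
      map_add' := fun a b => by
        ext i
        refine Fin.lastCases ?_ (fun i => ?_) i <;> simp [hvec, EuclideanSpace.equiv]
      map_smul' := fun a b => by
        ext i
        refine Fin.lastCases ?_ (fun i => ?_) i <;> simp [hvec, EuclideanSpace.equiv] }

/-- The last basis vector. -/
def eL (n : ℕ) : EuclideanSpace ℝ (Fin (n + 1)) := hvec 0 1

lemma rhoL_apply {n : ℕ} (z : EuclideanSpace ℝ (Fin (n + 1))) : rhoL n z = tlast z := rfl
lemma XL_apply {n : ℕ} (z : EuclideanSpace ℝ (Fin (n + 1))) : XL n z = xpart z := rfl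
lemma JL_apply {n : ℕ} (x : EuclideanSpace ℝ (Fin n)) : JL n x = hvec x 0 := rfl

lemma hvec_eq {n : ℕ} (x : EuclideanSpace ℝ (Fin n)) (c : ℝ) :
    hvec x c = JL n x + c • eL n := by
  rw [JL_apply, eL]
  ext i
  refine Fin.lastCases ?_ (fun i => ?_) i <;> simp [hvec, EuclideanSpace.equiv]

lemma norm_eL (n : ℕ) : ‖eL n‖ = 1 := by
  have := norm_sq_hvec (0 : EuclideanSpace ℝ (Fin n)) 1
  rw [← eL] at this
  have h0 := norm_nonneg (eL n)
  simp only [norm_zero] at this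
  nlinarith

lemma norm_JL {n : ℕ} (x : EuclideanSpace ℝ (Fin n)) : ‖JL n x‖ = ‖x‖ := by
  have := norm_sq_hvec x 0
  rw [← JL_apply] at this
  simp at this
  exact this

lemma Tmap_deriv {n : ℕ} (k0 : ℝ → ℝ) (s : ℝ → EuclideanSpace ℝ (Fin (n + 1)))
    (R : ℝ → EuclideanSpace ℝ (Fin (n + 1)) →L[ℝ] EuclideanSpace ℝ (Fin (n + 1)))
    (z : EuclideanSpace ℝ (Fin (n + 1))) (hk : DifferentiableAt ℝ k0 (tlast z))
    (hs : DifferentiableAt ℝ s (tlast z)) (hR : DifferentiableAt ℝ R (tlast z))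
    (hz : ‖xpart z‖ < k0 (tlast z)) :
    ∃ D : EuclideanSpace ℝ (Fin (n + 1)) →L[ℝ] EuclideanSpace ℝ (Fin (n + 1)),
      ∃ q : EuclideanSpace ℝ (Fin (n + 1)) →L[ℝ] ℝ,
      HasFDerivAt (Tmap k0 s R) D z ∧
      (∀ v, √(k0 (tlast z) ^ 2 - ‖xpart z‖ ^ 2) * q v =
        k0 (tlast z) * deriv k0 (tlast z) * tlast v - inner ℝ (xpart z) (xpart v)) ∧
      (∀ v, D v = R (tlast z) (JL n (xpart v) + q v • eL n -
          tlast v • (k0 (tlast z) • deriv s (tlast z) + deriv k0 (tlast z) • s (tlast z))) +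
        tlast v • deriv R (tlast z)
          (hvec (xpart z) (√(k0 (tlast z) ^ 2 - ‖xpart z‖ ^ 2)) - k0 (tlast z) • s (tlast z))) := by
  have hpos : 0 < k0 (tlast z) ^ 2 - ‖xpart z‖ ^ 2 := by nlinarith [norm_nonneg (xpart z)]
  have dρ : HasFDerivAt (fun y => tlast y) (rhoL n) z := (rhoL n).hasFDerivAt
  have dX : HasFDerivAt (fun y => xpart y) (XL n) z := (XL n).hasFDerivAt
  have dk := hk.hasDerivAt.hasFDerivAt.comp z dρ
  have ds := hs.hasDerivAt.hasFDerivAt.comp z dρ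
  have dR := hR.hasDerivAt.hasFDerivAt.comp z dρ
  obtain ⟨q, dq, hq⟩ : ∃ q : EuclideanSpace ℝ (Fin (n + 1)) →L[ℝ] ℝ,
      HasFDerivAt (fun y => √(k0 (tlast y) ^ 2 - ‖xpart y‖ ^ 2)) q z ∧
      (∀ v, √(k0 (tlast z) ^ 2 - ‖xpart z‖ ^ 2) * q v =
        k0 (tlast z) * deriv k0 (tlast z) * tlast v - inner ℝ (xpart z) (xpart v)) := by
    refine ⟨_, ((dk.pow 2).sub dX.norm_sq).sqrt hpos.ne', fun v => ?_⟩
    have := Real.sqrt_pos.2 hpos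
    simp [rhoL_apply, XL_apply]
    field_simp
  have dJ := (JL n).hasFDerivAt.comp z dX
  have dall := dR.clm_apply ((dJ.add (dq.smul_const (eL n))).sub (dk.smul ds))
  refine ⟨_, q, dall.congr_of_eventuallyEq (Filter.Eventually.of_forall fun y => ?_), hq,
    fun v => ?_⟩
  · simp [Tmap, hvec_eq]
  · simp [hvec_eq, rhoL_apply, XL_apply]
    module

lemma norm_R {n : ℕ} (A : EuclideanSpace ℝ (Fin n) →L[ℝ] EuclideanSpace ℝ (Fin n))
    (hA : (ContinuousLinearMap.adjoint A).comp A = ContinuousLinearMap.id ℝ _)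
    (v : EuclideanSpace ℝ (Fin n)) : ‖A v‖ = ‖v‖ :=
  (ContinuousLinearMap.norm_map_iff_adjoint_comp_self A).2 hA v

lemma Tmap_det_bound {n : ℕ} (M : ℝ) (hM : 0 ≤ M) : ∃ C : ℝ,
    ∀ (k0 : ℝ → ℝ) (s : ℝ → EuclideanSpace ℝ (Fin (n + 1)))
    (R : ℝ → EuclideanSpace ℝ (Fin (n + 1)) →L[ℝ] EuclideanSpace ℝ (Fin (n + 1)))
    (z : EuclideanSpace ℝ (Fin (n + 1))), DifferentiableAt ℝ k0 (tlast z) →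
    DifferentiableAt ℝ s (tlast z) → DifferentiableAt ℝ R (tlast z) →
    ‖xpart z‖ < k0 (tlast z) → k0 (tlast z) ≤ M → |deriv k0 (tlast z)| ≤ M →
    ‖s (tlast z)‖ = 1 → ‖deriv s (tlast z)‖ ≤ M → ‖deriv R (tlast z)‖ ≤ M →
    (ContinuousLinearMap.adjoint (R (tlast z))).comp (R (tlast z)) =
        ContinuousLinearMap.id ℝ (EuclideanSpace ℝ (Fin (n + 1))) →
    LinearMap.det ((R (tlast z)) :
      EuclideanSpace ℝ (Fin (n + 1)) →ₗ[ℝ] EuclideanSpace ℝ (Fin (n + 1))) = 1 →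
    |(fderiv ℝ (Tmap k0 s R) z).det| ≤ C * (1 / √(k0 (tlast z) ^ 2 - ‖xpart z‖ ^ 2)) := by
  obtain ⟨C, hC⟩ := det_bdd (E := EuclideanSpace ℝ (Fin (n + 1)))
    ((2 + M) * (1 + (M * M + M) + M * (M + M + M)) + (M * M + M))
  refine ⟨C, fun k0 s R z hk hs hR hz hkM hk' hs1 hs' hR' hRR hdet => ?_⟩
  obtain ⟨D, q, hD, hq, hDv⟩ := Tmap_deriv k0 s R z hk hs hR hz
  rw [hD.fderiv]
  have hpos : 0 < k0 (tlast z) ^ 2 - ‖xpart z‖ ^ 2 := by nlinarith [norm_nonneg (xpart z)]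
  have hx0 := norm_nonneg (xpart z)
  generalize tlast z = t at *
  generalize xpart z = x at *
  have hκ : 0 < √(k0 t ^ 2 - ‖x‖ ^ 2) := Real.sqrt_pos.2 hpos
  have hκ2 : √(k0 t ^ 2 - ‖x‖ ^ 2) ^ 2 = k0 t ^ 2 - ‖x‖ ^ 2 := Real.sq_sqrt hpos.le
  generalize √(k0 t ^ 2 - ‖x‖ ^ 2) = κ at *
  have hk0 : 0 < k0 t := lt_of_le_of_lt hx0 hz
  have hκk : κ ≤ M := by nlinarith
  set A := ContinuousLinearMap.adjoint (R t) with hAdef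
  have hAR : ∀ v, A (R t v) = v := fun v => by
    have := congrArg (fun B => B v) hRR
    simpa using this
  have hAn : ∀ v, ‖A v‖ ≤ ‖v‖ := by
    have h1 : ‖A‖ ≤ 1 := by
      rw [hAdef, LinearIsometryEquiv.norm_map]
      exact ContinuousLinearMap.opNorm_le_bound _ zero_le_one
        (fun v => by rw [norm_R _ hRR, one_mul])
    intro v
    calc _ ≤ ‖A‖ * ‖v‖ := A.le_opNorm v
      _ ≤ 1 * ‖v‖ := by gcongr
      _ = _ := one_mul _
  set P : EuclideanSpace ℝ (Fin (n + 1)) →L[ℝ] EuclideanSpace ℝ (Fin (n + 1)) :=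
    LinearMap.toContinuousLinearMap
      (LinearMap.transvection ((κ - 1) • (rhoL n : EuclideanSpace ℝ (Fin (n + 1)) →ₗ[ℝ] ℝ)) (eL n))
    with hP
  have hPv : ∀ v, P v = v + ((κ - 1) * tlast v) • eL n := fun v => by
    simp [hP, LinearMap.transvection.apply, rhoL_apply]
  have hte : tlast (eL n) = 1 := tlast_hvec _ _
  have hPe : P (eL n) = κ • eL n := by
    rw [hPv, hte]; module
  have hPn : ∀ v, ‖P v‖ ≤ (2 + M) * ‖v‖ := by
    intro v
    rw [hPv]
    have h1 : |κ - 1| ≤ 1 + M := by rw [abs_le]; constructor <;> linarith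
    calc _ ≤ ‖v‖ + ‖((κ - 1) * tlast v) • eL n‖ := norm_add_le _ _
      _ = ‖v‖ + |κ - 1| * |tlast v| := by
        rw [norm_smul, norm_eL, mul_one, Real.norm_eq_abs, abs_mul]
      _ ≤ ‖v‖ + (1 + M) * ‖v‖ := by
        gcongr
        exact abs_tlast_le v
      _ = _ := by ring
  set Q := P.comp (A.comp D) with hQ
  have hdetQ : Q.det = κ * D.det := by
    have hd1 : LinearMap.det (P : EuclideanSpace ℝ (Fin (n + 1)) →ₗ[ℝ]
        EuclideanSpace ℝ (Fin (n + 1))) = κ := by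
      have : (P : EuclideanSpace ℝ (Fin (n + 1)) →ₗ[ℝ] EuclideanSpace ℝ (Fin (n + 1))) =
        LinearMap.transvection
          ((κ - 1) • (rhoL n : EuclideanSpace ℝ (Fin (n + 1)) →ₗ[ℝ] ℝ)) (eL n) := by
        rw [hP]; rfl
      rw [this, LinearMap.transvection.det]
      simp [rhoL_apply, hte]
    have hd2 : LinearMap.det (A : EuclideanSpace ℝ (Fin (n + 1)) →ₗ[ℝ]
        EuclideanSpace ℝ (Fin (n + 1))) = 1 := by
      have h1 : (A : EuclideanSpace ℝ (Fin (n + 1)) →ₗ[ℝ] EuclideanSpace ℝ (Fin (n + 1))) ∘ₗ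
          (R t : EuclideanSpace ℝ (Fin (n + 1)) →ₗ[ℝ] EuclideanSpace ℝ (Fin (n + 1))) =
          LinearMap.id := by
        ext1 v
        exact hAR v
      have h2 := congrArg LinearMap.det h1
      rwa [LinearMap.det_comp, hdet, mul_one, LinearMap.det_id] at h2
    have : Q.det = LinearMap.det ((P : EuclideanSpace ℝ (Fin (n + 1)) →ₗ[ℝ]
        EuclideanSpace ℝ (Fin (n + 1))) ∘ₗ ((A : EuclideanSpace ℝ (Fin (n + 1)) →ₗ[ℝ]
        EuclideanSpace ℝ (Fin (n + 1))) ∘ₗ (D : EuclideanSpace ℝ (Fin (n + 1)) →ₗ[ℝ]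
        EuclideanSpace ℝ (Fin (n + 1))))) := rfl
    rw [this, LinearMap.det_comp, LinearMap.det_comp, hd1, hd2, one_mul]
  have hQn : ‖Q‖ ≤ (2 + M) * (1 + (M * M + M) + M * (M + M + M)) + (M * M + M) := by
    apply ContinuousLinearMap.opNorm_le_bound _ (by positivity)
    intro v
    have e : Q v = P (JL n (xpart v) - tlast v • (k0 t • deriv s t + deriv k0 t • s t) +
        tlast v • A (deriv R t (hvec x κ - k0 t • s t))) + (κ * q v) • eL n := by
      have : Q v = P (A (D v)) := rfl
      rw [this, hDv, map_add, hAR, map_smul, add_sub_right_comm, add_right_comm, map_add, map_smul,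
        hPe, smul_smul, mul_comm κ]
    have hxv := norm_xpart_le v
    have htv := abs_tlast_le v
    have hv := norm_nonneg v
    have b1 : ‖(κ * q v) • eL n‖ ≤ (M * M + M) * ‖v‖ := by
      rw [norm_smul, norm_eL, mul_one, hq, Real.norm_eq_abs]
      calc _ ≤ |k0 t * deriv k0 t * tlast v| + |inner ℝ x (xpart v)| := abs_sub _ _
        _ ≤ M * M * ‖v‖ + M * ‖v‖ := by
          rw [abs_mul, abs_mul, abs_of_pos hk0]
          gcongr
          calc _ ≤ ‖x‖ * ‖xpart v‖ := abs_real_inner_le_norm _ _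
            _ ≤ _ := by gcongr; linarith
        _ = _ := by ring
    have b2 : ‖k0 t • deriv s t + deriv k0 t • s t‖ ≤ M * M + M := by
      refine (norm_add_le _ _).trans ?_
      rw [norm_smul, norm_smul, hs1, mul_one, Real.norm_of_nonneg hk0.le, Real.norm_eq_abs]
      gcongr
    have b3 : ‖A (deriv R t (hvec x κ - k0 t • s t))‖ ≤ M * (M + M + M) := by
      refine (hAn _).trans (((deriv R t).le_opNorm _).trans ?_)
      gcongr
      refine (norm_sub_le _ _).trans ?_
      rw [norm_smul, hs1, mul_one, Real.norm_of_nonneg hk0.le]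
      have : ‖hvec x κ‖ ≤ M := by
        have := norm_sq_hvec x κ
        nlinarith [norm_nonneg (hvec x κ)]
      linarith
    have b4 : ‖JL n (xpart v) - tlast v • (k0 t • deriv s t + deriv k0 t • s t) +
        tlast v • A (deriv R t (hvec x κ - k0 t • s t))‖ ≤
        (1 + (M * M + M) + M * (M + M + M)) * ‖v‖ := by
      calc _ ≤ ‖JL n (xpart v)‖ + ‖tlast v • (k0 t • deriv s t + deriv k0 t • s t)‖ +
            ‖tlast v • A (deriv R t (hvec x κ - k0 t • s t))‖ :=
            (norm_add_le _ _).trans (by gcongr; exact norm_sub_le _ _)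
        _ ≤ ‖v‖ + ‖v‖ * (M * M + M) + ‖v‖ * (M * (M + M + M)) := by
            rw [norm_JL, norm_smul, norm_smul, Real.norm_eq_abs]
            gcongr
        _ = _ := by ring
    rw [e]
    calc _ ≤ _ := norm_add_le _ _
      _ ≤ (2 + M) * ((1 + (M * M + M) + M * (M + M + M)) * ‖v‖) + (M * M + M) * ‖v‖ := by
          gcongr
          exact (hPn _).trans (by gcongr)
      _ = _ := by ring
  have := hC Q hQn
  rw [hdetQ, abs_mul, abs_of_pos hκ] at this
  rw [mul_one_div, le_div_iff₀ hκ, mul_comm]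
  exact this


set_option maxHeartbeats 2000000

/-- Area formula / Banach indicatrix for the coordinate transformation `T`: the total
derivative of `T` exists a.e. on `U`, its Jacobian determinant is integrable on `U`, its
integral equals the integral over `ℝ^{n+1}` of the cardinality of the fibres of `T` (over `U`),
and in particular almost every fibre is finite. -/
theorem Tmap_area_formula (n : ℕ) (hn : 1 ≤ n) (L : ℝ) (hL : 0 < L)
    (k0 : ℝ → ℝ) (s : ℝ → EuclideanSpace ℝ (Fin (n + 1)))
    (R : ℝ → EuclideanSpace ℝ (Fin (n + 1)) →L[ℝ] EuclideanSpace ℝ (Fin (n + 1)))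
    (hk0pos : ∀ t ∈ Set.Icc (0 : ℝ) L, 0 < k0 t)
    (hk0bdd : ∃ M : ℝ, ∀ t ∈ Set.Icc (0 : ℝ) L, k0 t ≤ M)
    (hs : ∀ t ∈ Set.Icc (0 : ℝ) L, ‖s t‖ = 1)
    (hR : ∀ t ∈ Set.Icc (0 : ℝ) L,
      (ContinuousLinearMap.adjoint (R t)).comp (R t) =
        ContinuousLinearMap.id ℝ (EuclideanSpace ℝ (Fin (n + 1))) ∧
      LinearMap.det ((R t) : EuclideanSpace ℝ (Fin (n + 1)) →ₗ[ℝ] EuclideanSpace ℝ (Fin (n + 1)))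
        = 1)
    (hC1 : ∃ (Ex : Finset ℝ) (M : ℝ), ∀ t ∈ Set.Icc (0 : ℝ) L \ (Ex : Set ℝ),
      (ContDiffAt ℝ 1 k0 t ∧ |deriv k0 t| ≤ M) ∧
      (ContDiffAt ℝ 1 s t ∧ ‖deriv s t‖ ≤ M) ∧
      (ContDiffAt ℝ 1 R t ∧ ‖deriv R t‖ ≤ M)) :
    (∀ᵐ z ∂(volume.restrict (Uset L k0)), DifferentiableAt ℝ (Tmap k0 s R) z) ∧
    IntegrableOn
      (fun z => |LinearMap.det ((fderiv ℝ (Tmap k0 s R) z :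
        EuclideanSpace ℝ (Fin (n + 1)) →ₗ[ℝ] EuclideanSpace ℝ (Fin (n + 1))))|)
      (Uset L k0) volume ∧
    (∫⁻ z in Uset L k0,
        ENNReal.ofReal |LinearMap.det ((fderiv ℝ (Tmap k0 s R) z :
          EuclideanSpace ℝ (Fin (n + 1)) →ₗ[ℝ] EuclideanSpace ℝ (Fin (n + 1))))| =
      ∫⁻ y : EuclideanSpace ℝ (Fin (n + 1)),
        ENat.toENNReal ((Tmap k0 s R ⁻¹' {y} ∩ Uset L k0).encard)) ∧
    (∀ᵐ y : EuclideanSpace ℝ (Fin (n + 1)), (Tmap k0 s R ⁻¹' {y} ∩ Uset L k0).Finite) := by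
  classical
  obtain ⟨Ex, M1, hEx⟩ := hC1
  obtain ⟨M0, hM0⟩ := hk0bdd
  obtain ⟨M, hM, hMM0, hMM1⟩ : ∃ M : ℝ, 0 ≤ M ∧ M0 ≤ M ∧ M1 ≤ M :=
    ⟨max 0 (max M0 M1), le_max_left _ _, (le_max_left _ _).trans (le_max_right _ _),
      (le_max_right _ _).trans (le_max_right _ _)⟩
  set f := Tmap k0 s R with hf
  set O : Set ℝ := Set.Ioo 0 L \ (Ex : Set ℝ) with hO
  have hOo : IsOpen O := isOpen_Ioo.sdiff Ex.finite_toSet.isClosed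
  have hOI : ∀ t ∈ O, t ∈ Set.Icc (0 : ℝ) L := fun t ht => Set.Ioo_subset_Icc_self ht.1
  have hOE : ∀ t ∈ O, t ∈ Set.Icc (0 : ℝ) L \ (Ex : Set ℝ) := fun t ht => ⟨hOI t ht, ht.2⟩
  set G : Set (EuclideanSpace ℝ (Fin (n + 1))) :=
    {z | tlast z ∈ O ∧ ‖xpart z‖ < k0 (tlast z)} with hG
  have hct : Continuous (fun z : EuclideanSpace ℝ (Fin (n + 1)) => tlast z) := (rhoL n).continuous
  have hcx : Continuous (fun z : EuclideanSpace ℝ (Fin (n + 1)) => xpart z) := (XL n).continuous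
  have hdk : ∀ t ∈ O, DifferentiableAt ℝ k0 t := fun t ht =>
    (hEx t (hOE t ht)).1.1.differentiableAt one_ne_zero
  have hds : ∀ t ∈ O, DifferentiableAt ℝ s t := fun t ht =>
    (hEx t (hOE t ht)).2.1.1.differentiableAt one_ne_zero
  have hdR : ∀ t ∈ O, DifferentiableAt ℝ R t := fun t ht =>
    (hEx t (hOE t ht)).2.2.1.differentiableAt one_ne_zero
  have hGo : IsOpen G := by
    rw [isOpen_iff_mem_nhds]
    intro z hz
    have h1 : ContinuousAt (fun y : EuclideanSpace ℝ (Fin (n + 1)) => k0 (tlast y)) z :=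
      ContinuousAt.comp (f := fun y : EuclideanSpace ℝ (Fin (n + 1)) => tlast y) (g := k0)
        (hdk _ hz.1).continuousAt hct.continuousAt
    filter_upwards [hct.continuousAt.preimage_mem_nhds (hOo.mem_nhds hz.1),
      hcx.norm.continuousAt.eventually_lt h1 hz.2] with y h2 h3
    exact ⟨h2, h3⟩
  have hGm : MeasurableSet G := hGo.measurableSet
  have hGU : G ⊆ Uset L k0 := fun z hz => ⟨hOI _ hz.1, hz.2⟩
  set N := Uset L k0 \ G with hN
  have hNsub : ∀ z ∈ N, tlast z ∈ insert 0 (insert L Ex) := by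
    intro z hz
    by_contra h
    simp only [Finset.mem_insert, not_or] at h
    refine hz.2 ⟨⟨⟨lt_of_le_of_ne hz.1.1.1 (Ne.symm h.1), lt_of_le_of_ne hz.1.1.2 h.2.1⟩,
      by simpa using h.2.2⟩, hz.1.2⟩
  have hN0 : volume N = 0 := by
    refine measure_mono_null (t := ⋃ t ∈ insert 0 (insert L Ex),
      {z : EuclideanSpace ℝ (Fin (n + 1)) | tlast z = t}) (fun z hz => ?_) ?_
    · simp only [Set.mem_iUnion]
      exact ⟨tlast z, hNsub z hz, rfl⟩
    · exact (measure_biUnion_null_iff (Finset.countable_toSet _)).2 (fun t _ => slice_null n t)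
  have hTN0 : volume (f '' N) = 0 := by
    refine measure_mono_null (t := ⋃ t ∈ insert 0 (insert L Ex),
      Metric.sphere (-(R t (k0 t • s t))) (k0 t)) ?_ ?_
    · rintro _ ⟨z, hz, rfl⟩
      simp only [Set.mem_iUnion]
      refine ⟨tlast z, hNsub z hz, ?_⟩
      have hzU := hz.1
      have hp := hk0pos _ hzU.1
      rw [mem_sphere_iff_norm, hf, Tmap, sub_neg_eq_add, map_sub, sub_add_cancel,
        norm_R _ (hR _ hzU.1).1]
      have h1 := norm_sq_hvec (xpart z) √(k0 (tlast z) ^ 2 - ‖xpart z‖ ^ 2)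
      have h2 := hzU.2
      rw [Real.sq_sqrt (by nlinarith [norm_nonneg (xpart z)])] at h1
      have h3 : ‖hvec (xpart z) √(k0 (tlast z) ^ 2 - ‖xpart z‖ ^ 2)‖ ^ 2 = k0 (tlast z) ^ 2 := by
        rw [h1]; ring
      exact (sq_eq_sq₀ (norm_nonneg _) hp.le).1 h3
    · exact (measure_biUnion_null_iff (Finset.countable_toSet _)).2
        (fun t _ => Measure.addHaar_sphere _ _ _)
  have hres : (volume : Measure (EuclideanSpace ℝ (Fin (n + 1)))).restrict (Uset L k0) =
      volume.restrict G := by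
    apply Measure.restrict_congr_set
    exact (ae_le_set.2 hN0).antisymm (Filter.Eventually.of_forall hGU)
  have hdiff : ∀ z ∈ G, DifferentiableAt ℝ f z := by
    intro z hz
    obtain ⟨D, q, hD, _⟩ := Tmap_deriv k0 s R z (hdk _ hz.1) (hds _ hz.1) (hdR _ hz.1) hz.2
    exact hD.differentiableAt
  obtain ⟨C, hC⟩ := Tmap_det_bound (n := n) M hM
  have hbound : ∀ z ∈ G, |(fderiv ℝ f z).det| ≤
      C * (1 / √(k0 (tlast z) ^ 2 - ‖xpart z‖ ^ 2)) := by
    intro z hz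
    have hI := hOI _ hz.1
    obtain ⟨⟨-, h1⟩, ⟨-, h2⟩, ⟨-, h3⟩⟩ := hEx _ (hOE _ hz.1)
    exact hC k0 s R z (hdk _ hz.1) (hds _ hz.1) (hdR _ hz.1) hz.2 ((hM0 _ hI).trans hMM0)
      (h1.trans hMM1) (hs _ hI) (h2.trans hMM1) (h3.trans hMM1) (hR _ hI).1 (hR _ hI).2
  have hmdet : Measurable (fun z => (fderiv ℝ f z).det) :=
    ContinuousLinearMap.continuous_det.measurable.comp (measurable_fderiv ℝ f)
  have hfin : ∫⁻ z in G, ENNReal.ofReal |(fderiv ℝ f z).det| < ⊤ := by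
    obtain ⟨C1, hC1, hC1k⟩ := ker_bound n hn M
    set k : ℝ → ℝ := O.piecewise k0 (fun _ => 0) with hk
    have hkm : Measurable k := ContinuousOn.measurable_piecewise
      (fun t ht => (hdk t ht).continuousAt.continuousWithinAt) continuousOn_const
      hOo.measurableSet
    have hkO : ∀ t ∈ O, k t = k0 t := fun t ht => Set.piecewise_eq_of_mem _ _ _ ht
    have hkO' : ∀ t ∉ O, k t = 0 := fun t ht => Set.piecewise_eq_of_notMem _ _ _ ht
    set g : EuclideanSpace ℝ (Fin n) × ℝ → ℝ≥0∞ :=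
      fun p => ENNReal.ofReal (1 / √(k p.2 ^ 2 - ‖p.1‖ ^ 2)) with hg
    have hgm : Measurable g := by
      have : Measurable (fun p : EuclideanSpace ℝ (Fin n) × ℝ => k p.2) := hkm.comp measurable_snd
      fun_prop
    have hgm2 : Measurable (fun z : EuclideanSpace ℝ (Fin (n + 1)) => g (xpart z, tlast z)) :=
      hgm.comp (hcx.measurable.prodMk hct.measurable)
    calc ∫⁻ z in G, ENNReal.ofReal |(fderiv ℝ f z).det|
        ≤ ∫⁻ z in G, ENNReal.ofReal C * g (xpart z, tlast z) := by
          refine setLIntegral_mono (hgm2.const_mul _) (fun z hz => ?_)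
          rw [hg]
          simp only
          rw [hkO _ hz.1, ← ENNReal.ofReal_mul' (by positivity)]
          exact ENNReal.ofReal_le_ofReal (hbound z hz)
      _ ≤ ∫⁻ z, ENNReal.ofReal C * g (xpart z, tlast z) := setLIntegral_le_lintegral _ _
      _ = ENNReal.ofReal C * ∫⁻ t : ℝ, ∫⁻ x : EuclideanSpace ℝ (Fin n), g (x, t) := by
          rw [lintegral_const_mul _ hgm2, lintegral_split n g hgm]
      _ ≤ ENNReal.ofReal C * ∫⁻ t : ℝ, (Set.Icc 0 L).indicator (fun _ => C1) t := by
          gcongr with t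
          by_cases ht : t ∈ O
          · rw [Set.indicator_of_mem (hOI t ht)]
            simp only [hg]
            refine hC1k (k t) ?_ ?_
            · rw [hkO t ht]; exact (hk0pos t (hOI t ht)).le
            · rw [hkO t ht]; exact (hM0 t (hOI t ht)).trans hMM0
          · have : ∀ x : EuclideanSpace ℝ (Fin n), g (x, t) = 0 := by
              intro x
              have : √(k t ^ 2 - ‖x‖ ^ 2) = 0 := by
                rw [hkO' t ht]
                exact Real.sqrt_eq_zero_of_nonpos (by nlinarith [sq_nonneg ‖x‖])
              simp [hg, this]
            simp [this]
      _ < ⊤ := by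
          rw [lintegral_indicator measurableSet_Icc]
          simp only [lintegral_const, Measure.restrict_apply_univ, Real.volume_Icc]
          exact ENNReal.mul_lt_top ENNReal.ofReal_lt_top
            (ENNReal.mul_lt_top hC1.lt_top ENNReal.ofReal_lt_top)
  have hmz : MeasurableSet {z | (fderiv ℝ f z).det = 0} := hmdet (measurableSet_singleton 0)
  set Gr := G \ {z | (fderiv ℝ f z).det = 0} with hGr
  set Gc := G ∩ {z | (fderiv ℝ f z).det = 0} with hGc
  have hGrm : MeasurableSet Gr := hGm.diff hmz
  have hTc : volume (f '' Gc) = 0 :=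
    addHaar_image_eq_zero_of_det_fderivWithin_eq_zero volume (f' := fderiv ℝ f)
      (fun x hx => (hdiff x hx.1).hasFDerivAt.hasFDerivWithinAt) (fun x hx => hx.2)
  obtain ⟨hmc, harea⟩ := area_general (volume : Measure (EuclideanSpace ℝ (Fin (n + 1)))) f
    (fderiv ℝ f) Gr hGrm (fun x hx => (hdiff x hx.1).hasFDerivAt.hasFDerivWithinAt)
    (fun x hx => hx.2)
  have hsplit : ∫⁻ z in G, ENNReal.ofReal |(fderiv ℝ f z).det| =
      ∫⁻ z in Gr, ENNReal.ofReal |(fderiv ℝ f z).det| := by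
    rw [← lintegral_inter_add_sdiff _ G hmz]
    have : ∫⁻ z in G ∩ {z | (fderiv ℝ f z).det = 0}, ENNReal.ofReal |(fderiv ℝ f z).det| = 0 := by
      rw [setLIntegral_congr_fun (g := fun _ => 0) (hGm.inter hmz) (fun z hz => by
        have : (fderiv ℝ f z).det = 0 := hz.2
        simp [this])]
      simp
    rw [this, zero_add]
  have hae : ∀ᵐ y : EuclideanSpace ℝ (Fin (n + 1)), f ⁻¹' {y} ∩ Uset L k0 = f ⁻¹' {y} ∩ Gr := by
    filter_upwards [measure_eq_zero_iff_ae_notMem.1 hTN0, measure_eq_zero_iff_ae_notMem.1 hTc]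
      with y h1 h2
    ext z
    constructor
    · rintro ⟨hy, hz⟩
      have hzG : z ∈ G := by
        by_contra h
        exact h1 ⟨z, ⟨hz, h⟩, hy⟩
      exact ⟨hy, hzG, fun h => h2 ⟨z, ⟨hzG, h⟩, hy⟩⟩
    · rintro ⟨hy, hz⟩
      exact ⟨hy, hGU hz.1⟩
  refine ⟨?_, ?_, ?_, ?_⟩
  · rw [hres]
    exact ae_restrict_of_forall_mem hGm hdiff
  · rw [IntegrableOn, hres]
    refine ⟨hmdet.abs.aestronglyMeasurable, ?_⟩
    rw [hasFiniteIntegral_iff_ofReal (Filter.Eventually.of_forall fun z => abs_nonneg _)]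
    exact hfin
  · rw [hres]
    refine (hsplit.trans harea).trans (lintegral_congr_ae ?_)
    filter_upwards [hae] with y hy
    rw [hy]
  · have h1 := ae_lt_top (μ := volume) hmc (by rw [← harea, ← hsplit]; exact hfin.ne)
    filter_upwards [hae, h1] with y hy h2
    rw [hy, ← Set.encard_lt_top_iff]
    exact ENat.toENNReal_lt_top.1 h2

end
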